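/- Let H be a torsion-free Hopf algebra over C[q,q⁻¹], and let H' := { a ∈ H | δ_n(a) ∈ (q−1)ⁿ H^{⊗n} for all n ∈ ℕ }, where δ_n = (id−ε)^{⊗n}∘Δⁿ. Let C_q ⊆ H be a unital subalgebra and left coideal, and define C_q^Lsh := { x ∈ C_q | δ_n(x) ∈ (q−1)ⁿ H^{⊗(n−1)} ⊗ C_q for all n ≥ 1 }. Then C_q^Lsh is a unital subalgebra of H'. -/

import Mathlib

/- STATEMENT 11: the Drinfeld-type transform C_q^Lsh of a left coideal subalgebra C_q of a
   torsion-free Hopf algebra H over ℂ[q,q⁻¹] is a unital subalgebra of H'. -/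

open scoped TensorProduct
open PiTensorProduct

namespace GQDP

/-- The ground ring `ℂ[q,q⁻¹]` of complex Laurent polynomials. -/
abbrev R : Type := LaurentPolynomial ℂ

/-- The indeterminate `q`. -/
noncomputable def q : R := LaurentPolynomial.T 1

variable (H : Type*) [Ring H] [HopfAlgebra R H] [NoZeroSMulDivisors R H]

/-- The `n`-fold tensor power `H^{⊗n}`. -/
abbrev TP (n : ℕ) := ⨂[R] (_ : Fin n), H

/-- The "tensor product" of two `R`-submodules of `H` inside `H ⊗[R] H`. -/
noncomputable def tsub (A B : Submodule R H) : Submodule R (H ⊗[R] H) :=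
  Submodule.span R {z | ∃ a ∈ A, ∃ b ∈ B, z = a ⊗ₜ[R] b}

/-- The "tensor product" of a family of submodules `p i ⊆ H` inside `H^{⊗n}`: the additive
    subgroup generated by the pure tensors with `i`-th entry in `p i` (for `n ≥ 1` this
    coincides with the `R`-span of such pure tensors). -/
noncomputable def tgrp {n : ℕ} (p : Fin n → Submodule R H) : AddSubgroup (TP H n) :=
  AddSubgroup.closure {z | ∃ f : Fin n → H, (∀ i, f i ∈ p i) ∧ z = PiTensorProduct.tprod R f}

/-- The canonical map `H ⊗ H^{⊗n} → H^{⊗(n+1)}`. -/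
noncomputable def step (n : ℕ) : (H ⊗[R] TP H n) →ₗ[R] TP H (n + 1) :=
  ((PiTensorProduct.reindex R (fun _ : Fin 1 ⊕ Fin n => H)
      (finSumFinEquiv.trans (finCongr (Nat.add_comm 1 n)))).toLinearMap
    ∘ₗ (PiTensorProduct.tmulEquiv (ι := Fin 1) (ι₂ := Fin n) R H).toLinearMap)
    ∘ₗ (LinearMap.rTensor (TP H n)
      (PiTensorProduct.subsingletonEquiv (0 : Fin 1) : (⨂[R] (_ : Fin 1), H) ≃ₗ[R] H).symm.toLinearMap)

/-- The iterated coproduct `Δⁿ : H → H^{⊗n}`, with `Δ⁰ := ε` and `Δ^{n+1} := (id ⊗ Δⁿ) ∘ Δ`. -/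
noncomputable def DeltaIter : (n : ℕ) → H →ₗ[R] TP H n
  | 0 => (PiTensorProduct.isEmptyEquiv (ι := Fin 0)).symm.toLinearMap
          ∘ₗ (Coalgebra.counit : H →ₗ[R] R)
  | n + 1 => step H n ∘ₗ LinearMap.lTensor H (DeltaIter n)
              ∘ₗ (Coalgebra.comul : H →ₗ[R] H ⊗[R] H)

/-- `δ_n := (id − η∘ε)^{⊗n} ∘ Δⁿ : H → H^{⊗n}`. -/
noncomputable def deltaN (n : ℕ) : H →ₗ[R] TP H n :=
  (PiTensorProduct.map fun _ =>
      (LinearMap.id : H →ₗ[R] H) - Algebra.linearMap R H ∘ₗ (Coalgebra.counit : H →ₗ[R] R))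
    ∘ₗ DeltaIter H n

/-- Drinfeld's subalgebra `H' = { a ∈ H | δ_n(a) ∈ (q−1)ⁿ H^{⊗n} for all n }`. -/
noncomputable def Hprime : Set H :=
  {a | ∀ n : ℕ, ∃ y : TP H n, deltaN H n a = ((q - 1) ^ n) • y}

/-- The Drinfeld-type transform `C^Lsh := { x ∈ C | δ_n(x) ∈ (q−1)ⁿ H^{⊗(n−1)} ⊗ C, ∀ n ≥ 1 }`. -/
noncomputable def Lsh (C : Submodule R H) : Set H :=
  {x | x ∈ C ∧ ∀ n : ℕ,
    ∃ y ∈ tgrp H (fun i : Fin (n + 1) => if i = Fin.last n then C else ⊤),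
      deltaN H (n + 1) x = ((q - 1) ^ (n + 1)) • y}

section helpers

theorem step_tprod (n : ℕ) (a : H) (f : Fin n → H) :
    step H n (a ⊗ₜ[R] PiTensorProduct.tprod R f)
      = PiTensorProduct.tprod R (Fin.cons a f : Fin (n + 1) → H) := by
  have h1 : (PiTensorProduct.subsingletonEquiv (0 : Fin 1) :
      (⨂[R] (_ : Fin 1), H) ≃ₗ[R] H).symm a = PiTensorProduct.tprod R (fun _ => a) := by
    rw [LinearEquiv.symm_apply_eq]
    simp
  simp only [step, LinearMap.comp_apply, LinearMap.rTensor_tmul, LinearEquiv.coe_coe, h1]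
  erw [PiTensorProduct.tmulEquiv_apply, PiTensorProduct.reindex_tprod]
  congr 1
  funext i
  refine Fin.cases ?_ (fun j => ?_) i
  · have : (finSumFinEquiv.trans (finCongr (Nat.add_comm 1 n))).symm 0
        = (Sum.inl 0 : Fin 1 ⊕ Fin n) := by
      rw [Equiv.symm_apply_eq]; ext; simp
    rw [this]; rfl
  · have : (finSumFinEquiv.trans (finCongr (Nat.add_comm 1 n))).symm j.succ
        = (Sum.inr j : Fin 1 ⊕ Fin n) := by
      rw [Equiv.symm_apply_eq]; ext; simp [Nat.add_comm]
    rw [this]; rfl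

theorem tp_ind {n : ℕ} {P : TP H n → Prop} (z : TP H n)
    (h0 : P 0) (ht : ∀ f, P (PiTensorProduct.tprod R f))
    (hs : ∀ (r : R) x, P x → P (r • x)) (ha : ∀ x y, P x → P y → P (x + y)) : P z := by
  induction z using PiTensorProduct.induction_on with
  | smul_tprod r f => exact hs _ _ (ht f)
  | add x y hx hy => exact ha _ _ hx hy

theorem step_mul_tmul (n : ℕ) (a b : H) (x y : TP H n) :
    step H n ((a * b) ⊗ₜ[R] (x * y)) = step H n (a ⊗ₜ[R] x) * step H n (b ⊗ₜ[R] y) := by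
  refine tp_ind H (P := fun x => step H n ((a * b) ⊗ₜ[R] (x * y))
    = step H n (a ⊗ₜ[R] x) * step H n (b ⊗ₜ[R] y)) x (by simp) (fun f => ?_) ?_ ?_
  · refine tp_ind H (P := fun y => step H n ((a * b) ⊗ₜ[R] (PiTensorProduct.tprod R f * y))
      = step H n (a ⊗ₜ[R] PiTensorProduct.tprod R f) * step H n (b ⊗ₜ[R] y)) y (by simp)
      (fun g => ?_) ?_ ?_
    · rw [PiTensorProduct.tprod_mul_tprod, step_tprod, step_tprod, step_tprod,
        PiTensorProduct.tprod_mul_tprod]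
      congr 1
      funext i
      refine Fin.cases ?_ (fun j => ?_) i <;> simp
    · intro r u hu
      simp only [mul_smul_comm, TensorProduct.tmul_smul, map_smul, hu]
    · intro u v hu hv
      simp only [mul_add, TensorProduct.tmul_add, map_add, hu, hv]
  · intro r u hu
    simp only [smul_mul_assoc, TensorProduct.tmul_smul, map_smul, hu]
  · intro u v hu hv
    simp only [add_mul, TensorProduct.tmul_add, map_add, hu, hv]

theorem DeltaIter_mul (n : ℕ) (x y : H) :
    DeltaIter H n (x * y) = DeltaIter H n x * DeltaIter H n y := by
  induction n generalizing x y with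
  | zero =>
    simp only [DeltaIter, LinearMap.comp_apply, Bialgebra.counit_mul, LinearEquiv.coe_coe]
    have h : ∀ r : R, (PiTensorProduct.isEmptyEquiv (ι := Fin 0) (R := R)
      (s := fun _ => H)).symm r = r • PiTensorProduct.tprod R (fun _ => (1 : H)) := by
      intro r
      rw [LinearEquiv.symm_apply_eq]
      simp
    rw [h, h, h, smul_mul_smul_comm, PiTensorProduct.tprod_mul_tprod]
    congr 2
    funext i
    exact i.elim0
  | succ n ih =>
    simp only [DeltaIter, LinearMap.comp_apply, Bialgebra.comul_mul]
    generalize Coalgebra.comul (R := R) x = X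
    generalize Coalgebra.comul (R := R) y = Y
    induction X using TensorProduct.induction_on with
    | zero => simp
    | add u v hu hv => simp only [add_mul, map_add, hu, hv]
    | tmul a b =>
      induction Y using TensorProduct.induction_on with
      | zero => simp
      | add u v hu hv => simp only [mul_add, map_add, hu, hv]
      | tmul c d =>
        rw [Algebra.TensorProduct.tmul_mul_tmul, LinearMap.lTensor_tmul, LinearMap.lTensor_tmul,
          LinearMap.lTensor_tmul, ih, step_mul_tmul]

theorem DeltaIter_one (n : ℕ) :
    DeltaIter H n 1 = PiTensorProduct.tprod R (fun _ => (1 : H)) := by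
  induction n with
  | zero =>
    simp only [DeltaIter, LinearMap.comp_apply, Bialgebra.counit_one, LinearEquiv.coe_coe]
    rw [LinearEquiv.symm_apply_eq]
    simp
  | succ n ih =>
    simp only [DeltaIter, LinearMap.comp_apply, Bialgebra.comul_one,
      Algebra.TensorProduct.one_def, LinearMap.lTensor_tmul, ih, step_tprod]
    congr 1
    funext i
    refine Fin.cases ?_ (fun j => ?_) i <;> simp

/-- `η ∘ ε`. -/
noncomputable def ee : H →ₗ[R] H :=
  Algebra.linearMap R H ∘ₗ (Coalgebra.counit : H →ₗ[R] R)

/-- `id - η ∘ ε` or `η ∘ ε`. -/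
noncomputable def ph (b : Bool) : H →ₗ[R] H :=
  if b then (LinearMap.id : H →ₗ[R] H) - ee H else ee H

/-- The components `δ_Λ`. -/
noncomputable def DD (n : ℕ) (s : Fin n → Bool) : H →ₗ[R] TP H n :=
  (PiTensorProduct.map fun i => ph H (s i)) ∘ₗ DeltaIter H n

theorem DD_true (n : ℕ) : DD H n (fun _ => true) = deltaN H n := by
  simp [DD, deltaN, ph, ee]

theorem map_step (n : ℕ) (φ : Fin (n + 1) → (H →ₗ[R] H)) (a : H) (z : TP H n) :
    PiTensorProduct.map φ (step H n (a ⊗ₜ[R] z))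
      = step H n (φ 0 a ⊗ₜ[R] PiTensorProduct.map (fun i => φ i.succ) z) := by
  refine tp_ind H (P := fun z => PiTensorProduct.map φ (step H n (a ⊗ₜ[R] z))
      = step H n (φ 0 a ⊗ₜ[R] PiTensorProduct.map (fun i => φ i.succ) z)) z (by simp)
      (fun g => ?_) ?_ ?_
  · rw [PiTensorProduct.map_tprod, step_tprod, step_tprod, PiTensorProduct.map_tprod]
    congr 1
    funext i
    refine Fin.cases ?_ (fun j => ?_) i <;> simp
  · intro r u hu
    simp only [TensorProduct.tmul_smul, map_smul, hu]
  · intro u v hu hv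
    simp only [TensorProduct.tmul_add, map_add, hu, hv]

theorem DD_succ (n : ℕ) (s : Fin (n + 1) → Bool) :
    DD H (n + 1) s = step H n ∘ₗ TensorProduct.map (ph H (s 0)) (DD H n (fun i => s i.succ))
      ∘ₗ (Coalgebra.comul : H →ₗ[R] H ⊗[R] H) := by
  have : (PiTensorProduct.map fun i => ph H (s i)) ∘ₗ step H n ∘ₗ
      LinearMap.lTensor H (DeltaIter H n)
      = step H n ∘ₗ TensorProduct.map (ph H (s 0)) (DD H n (fun i => s i.succ)) := by
    apply TensorProduct.ext'
    intro a b
    simp only [LinearMap.comp_apply, LinearMap.lTensor_tmul, TensorProduct.map_tmul, map_step, DD]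
  ext x
  exact LinearMap.congr_fun this (Coalgebra.comul x)

/-- `z ↦ 1 ⊗ z`. -/
noncomputable def oneT (n : ℕ) : TP H n →ₗ[R] TP H (n + 1) :=
  step H n ∘ₗ TensorProduct.mk R H (TP H n) 1

theorem DD_succ_false (n : ℕ) (s : Fin (n + 1) → Bool) (h : s 0 = false) :
    DD H (n + 1) s = oneT H n ∘ₗ DD H n (fun i => s i.succ) := by
  rw [DD_succ, h]
  ext x
  have h2 : ∀ z : H ⊗[R] H, TensorProduct.map (ph H false) (DD H n (fun i => s i.succ)) z
      = TensorProduct.map (Algebra.linearMap R H) (DD H n (fun i => s i.succ))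
        (LinearMap.rTensor H (Coalgebra.counit : H →ₗ[R] R) z) := by
    intro z
    induction z using TensorProduct.induction_on with
    | zero => simp
    | add u v hu hv => simp only [map_add, hu, hv]
    | tmul a b => simp [ph, ee]
  simp only [LinearMap.comp_apply, h2, Coalgebra.rTensor_counit_comul, TensorProduct.map_tmul,
    oneT, TensorProduct.mk_apply, Algebra.linearMap_apply, map_one]

theorem exists_unstep (n : ℕ) : ∃ u : TP H (n + 1) →ₗ[R] H ⊗[R] TP H n,
    ∀ z, u (step H n z) = z := by
  let e : H ⊗[R] TP H n ≃ₗ[R] TP H (n + 1) :=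
    (TensorProduct.congr (PiTensorProduct.subsingletonEquiv (0 : Fin 1) :
        (⨂[R] (_ : Fin 1), H) ≃ₗ[R] H).symm (LinearEquiv.refl R (TP H n))).trans
    ((PiTensorProduct.tmulEquiv (ι := Fin 1) (ι₂ := Fin n) R H).trans
    (PiTensorProduct.reindex R (fun _ : Fin 1 ⊕ Fin n => H)
      (finSumFinEquiv.trans (finCongr (Nat.add_comm 1 n)))))
  have he : ∀ z, step H n z = e z := fun z => rfl
  exact ⟨e.symm.toLinearMap, fun z => by rw [he]; simp⟩

theorem DD_factor (C : Subalgebra R H) (n : ℕ) (s : Fin n → Bool) :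
    ∃ k : ℕ, k = (∑ i, if s i then 1 else 0) ∧ k ≤ n ∧ ∃ J : TP H k →ₗ[R] TP H n,
      DD H n s = J ∘ₗ deltaN H k ∧
      ∀ f : Fin k → H, (∀ i : Fin k, i.val + 1 = k → f i ∈ C) →
        ∃ g : Fin n → H, (∀ i : Fin n, i.val + 1 = n → g i ∈ C) ∧
          J (PiTensorProduct.tprod R f) = PiTensorProduct.tprod R g := by
  induction n with
  | zero =>
    refine ⟨0, by simp, le_rfl, LinearMap.id, ?_, fun f _ => ⟨f, fun i => i.elim0, rfl⟩⟩
    rw [← DD_true, LinearMap.id_comp]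
    congr 1
    funext i
    exact i.elim0
  | succ n ih =>
    obtain ⟨k, hk, hkn, J, hJ, hP⟩ := ih (fun i => s i.succ)
    cases h : s 0 with
    | false =>
      refine ⟨k, ?_, by omega, oneT H n ∘ₗ J, ?_, ?_⟩
      · rw [Fin.sum_univ_succ, h, hk]; simp
      · rw [DD_succ_false H n s h, hJ, LinearMap.comp_assoc]
      · intro f hf
        obtain ⟨g, hg, e⟩ := hP f hf
        refine ⟨Fin.cons 1 g, ?_, ?_⟩
        · intro i
          refine Fin.cases ?_ (fun j => ?_) i
          · intro _; simpa using C.one_mem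
          · intro hj
            simpa using hg j (by simpa using hj)
        · rw [LinearMap.comp_apply, e, oneT, LinearMap.comp_apply, TensorProduct.mk_apply,
            step_tprod]
    | true =>
      obtain ⟨u, hu⟩ := exists_unstep H k
      refine ⟨k + 1, ?_, by omega, step H n ∘ₗ LinearMap.lTensor H J ∘ₗ u, ?_, ?_⟩
      · rw [Fin.sum_univ_succ, h, hk]; simp [Nat.add_comm]
      · rw [DD_succ, h, hJ, ← DD_true H (k + 1), DD_succ]
        ext x
        simp only [LinearMap.comp_apply, hu, DD_true]
        generalize Coalgebra.comul (R := R) x = X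
        induction X using TensorProduct.induction_on with
        | zero => simp
        | add u v hu hv => simp only [map_add, hu, hv]
        | tmul a b => simp
      · intro f hf
        obtain ⟨g, hg, e⟩ := hP (fun i => f i.succ) (fun i hi => hf i.succ (by simpa using hi))
        refine ⟨Fin.cons (f 0) g, ?_, ?_⟩
        · intro i
          refine Fin.cases ?_ (fun j => ?_) i
          · intro h0
            have : k = 0 := by simp at h0; omega
            simpa using hf 0 (by simp [this])
          · intro hj
            simpa using hg j (by simpa using hj)
        · have hf' : PiTensorProduct.tprod R f
              = step H k (f 0 ⊗ₜ[R] PiTensorProduct.tprod R (fun i => f i.succ)) := by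
            rw [step_tprod]
            congr 1
            exact (Fin.cons_self_tail f).symm
          rw [hf', LinearMap.comp_apply, LinearMap.comp_apply, hu, LinearMap.lTensor_tmul, e,
            step_tprod]

/-- The image of `H^{⊗(n-1)} ⊗ C`. -/
noncomputable def LL (C : Subalgebra R H) (n : ℕ) : Submodule R (TP H n) :=
  Submodule.span R {z | ∃ f : Fin n → H, (∀ i : Fin n, i.val + 1 = n → f i ∈ C) ∧
    z = PiTensorProduct.tprod R f}

theorem LL_mul (C : Subalgebra R H) (n : ℕ) (x y : TP H n) (hx : x ∈ LL H C n)
    (hy : y ∈ LL H C n) : x * y ∈ LL H C n := by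
  induction hx using Submodule.span_induction with
  | zero => rw [zero_mul]; exact zero_mem _
  | add u v _ _ hu hv => rw [add_mul]; exact add_mem hu hv
  | smul r u _ hu => rw [smul_mul_assoc]; exact Submodule.smul_mem _ _ hu
  | mem u hu =>
    obtain ⟨f, hf, rfl⟩ := hu
    induction hy using Submodule.span_induction with
    | zero => rw [mul_zero]; exact zero_mem _
    | add u v _ _ hu hv => rw [mul_add]; exact add_mem hu hv
    | smul r u _ hu => rw [mul_smul_comm]; exact Submodule.smul_mem _ _ hu
    | mem u hu =>
      obtain ⟨g, hg, rfl⟩ := hu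
      rw [PiTensorProduct.tprod_mul_tprod]
      exact Submodule.subset_span ⟨_, fun i hi => C.mul_mem (hf i hi) (hg i hi), rfl⟩

theorem tgrp_le_LL (C : Subalgebra R H) (n : ℕ) (z : TP H (n + 1))
    (hz : z ∈ tgrp H (fun i : Fin (n + 1) => if i = Fin.last n then C.toSubmodule else ⊤)) :
    z ∈ LL H C (n + 1) := by
  have : tgrp H (fun i : Fin (n + 1) => if i = Fin.last n then C.toSubmodule else ⊤)
      ≤ (LL H C (n + 1)).toAddSubgroup := by
    refine (AddSubgroup.closure_le _).2 ?_
    rintro _ ⟨f, hf, rfl⟩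
    refine Submodule.subset_span ⟨f, fun i hi => ?_, rfl⟩
    have hi' : i = Fin.last n := by ext; simp; omega
    simpa [hi'] using hf i
  exact this hz

theorem LL_le_tgrp (C : Subalgebra R H) (n : ℕ) (z : TP H (n + 1)) (hz : z ∈ LL H C (n + 1)) :
    z ∈ tgrp H (fun i : Fin (n + 1) => if i = Fin.last n then C.toSubmodule else ⊤) := by
  induction hz using Submodule.closure_induction with
  | zero => exact zero_mem _
  | add u v _ _ hu hv => exact add_mem hu hv
  | smul_mem r u hu =>
    obtain ⟨f, hf, rfl⟩ := hu
    refine AddSubgroup.subset_closure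
      ⟨Function.update f (Fin.last n) (r • f (Fin.last n)), fun i => ?_, ?_⟩
    · by_cases h : i = Fin.last n
      · subst h
        simpa using C.smul_mem (hf (Fin.last n) (by simp)) r
      · simp [h]
    · rw [MultilinearMap.map_update_smul, Function.update_eq_self]

theorem Lsh_mem {C : Subalgebra R H} {x : H} (hx : x ∈ Lsh H C.toSubmodule) (n : ℕ) :
    ∃ y ∈ LL H C n, deltaN H n x = ((q - 1) ^ n) • y := by
  cases n with
  | zero =>
    refine ⟨deltaN H 0 x, ?_, by simp⟩
    refine tp_ind H (P := fun z => z ∈ LL H C 0) _ (zero_mem _)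
      (fun f => Submodule.subset_span ⟨f, fun i => i.elim0, rfl⟩)
      (fun r u hu => Submodule.smul_mem _ _ hu) (fun u v hu hv => add_mem hu hv)
  | succ n =>
    obtain ⟨y, hy, e⟩ := hx.2 n
    exact ⟨y, tgrp_le_LL H C n y hy, e⟩

theorem DD_mem {C : Subalgebra R H} {x : H} (hx : x ∈ Lsh H C.toSubmodule) (n : ℕ)
    (s : Fin n → Bool) :
    ∃ y ∈ LL H C n, DD H n s x = ((q - 1) ^ (∑ i, if s i then 1 else 0)) • y := by
  obtain ⟨k, hk, -, J, hJ, hP⟩ := DD_factor H C n s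
  obtain ⟨y, hy, e⟩ := Lsh_mem H hx k
  refine ⟨J y, ?_, ?_⟩
  · have : LL H C k ≤ (LL H C n).comap J := by
      refine Submodule.span_le.2 ?_
      rintro _ ⟨f, hf, rfl⟩
      obtain ⟨g, hg, e⟩ := hP f hf
      exact Submodule.subset_span ⟨g, hg, e⟩
    exact this hy
  · rw [hJ, LinearMap.comp_apply, e, map_smul, ← hk]

/-- The three index pairs. -/
def pr1 (j : Fin 3) : Bool := if j = 2 then false else true

/-- The three index pairs. -/
def pr2 (j : Fin 3) : Bool := if j = 1 then false else true

theorem ph_mul (a b : H) : ph H true (a * b) = ∑ j : Fin 3, ph H (pr1 j) a * ph H (pr2 j) b := by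
  have he : ee H (a * b) = ee H a * ee H b := by simp [ee]
  simp [Fin.sum_univ_three, ph, pr1, pr2, he]
  noncomm_ring

theorem map_mul_sum (n : ℕ) (X Y : TP H n) :
    PiTensorProduct.map (fun _ => ph H true) (X * Y)
      = ∑ s : Fin n → Fin 3, PiTensorProduct.map (fun i => ph H (pr1 (s i))) X
          * PiTensorProduct.map (fun i => ph H (pr2 (s i))) Y := by
  refine tp_ind H (P := fun X => PiTensorProduct.map (fun _ => ph H true) (X * Y)
      = ∑ s : Fin n → Fin 3, PiTensorProduct.map (fun i => ph H (pr1 (s i))) X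
          * PiTensorProduct.map (fun i => ph H (pr2 (s i))) Y) X (by simp) (fun f => ?_) ?_ ?_
  · refine tp_ind H (P := fun Y => PiTensorProduct.map (fun _ => ph H true)
        (PiTensorProduct.tprod R f * Y)
      = ∑ s : Fin n → Fin 3, PiTensorProduct.map (fun i => ph H (pr1 (s i)))
          (PiTensorProduct.tprod R f)
          * PiTensorProduct.map (fun i => ph H (pr2 (s i))) Y) Y (by simp) (fun g => ?_) ?_ ?_
    · simp only [PiTensorProduct.tprod_mul_tprod, PiTensorProduct.map_tprod]
      refine Eq.trans ?_ (MultilinearMap.map_sum (PiTensorProduct.tprod R)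
        (fun i j => ph H (pr1 j) (f i) * ph H (pr2 j) (g i)))
      congr 1
      funext i
      exact ph_mul H (f i) (g i)
    · intro r u hu
      simp only [mul_smul_comm, map_smul, hu, Finset.smul_sum]
    · intro u v hu hv
      simp only [mul_add, map_add, hu, hv, Finset.sum_add_distrib]
  · intro r u hu
    simp only [smul_mul_assoc, map_smul, hu, Finset.smul_sum]
  · intro u v hu hv
    simp only [add_mul, map_add, hu, hv, Finset.sum_add_distrib]

theorem deltaN_mul (n : ℕ) (x y : H) :
    deltaN H n (x * y) = ∑ s : Fin n → Fin 3,
      DD H n (fun i => pr1 (s i)) x * DD H n (fun i => pr2 (s i)) y := by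
  rw [← DD_true]
  simp only [DD, LinearMap.comp_apply, DeltaIter_mul, map_mul_sum]

theorem mul_mem_aux {C : Subalgebra R H} {x y : H} (hx : x ∈ Lsh H C.toSubmodule)
    (hy : y ∈ Lsh H C.toSubmodule) (n : ℕ) :
    ∃ z ∈ LL H C n, deltaN H n (x * y) = ((q - 1) ^ n) • z := by
  have key : ∀ s : Fin n → Fin 3, ∃ z ∈ LL H C n,
      DD H n (fun i => pr1 (s i)) x * DD H n (fun i => pr2 (s i)) y = ((q - 1) ^ n) • z := by
    intro s
    obtain ⟨u, hu, eu⟩ := DD_mem H hx n (fun i => pr1 (s i))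
    obtain ⟨v, hv, ev⟩ := DD_mem H hy n (fun i => pr2 (s i))
    have hle : n ≤ (∑ i, if pr1 (s i) then 1 else 0) + (∑ i, if pr2 (s i) then 1 else 0) := by
      rw [← Finset.sum_add_distrib]
      have : ∑ i : Fin n, 1 ≤ ∑ i : Fin n,
          ((if pr1 (s i) then 1 else 0) + (if pr2 (s i) then 1 else 0)) := by
        refine Finset.sum_le_sum (fun i _ => ?_)
        generalize s i = j
        revert j
        decide
      simpa using this
    obtain ⟨d, hd⟩ := Nat.exists_eq_add_of_le hle
    refine ⟨((q - 1) ^ d) • (u * v), Submodule.smul_mem _ _ (LL_mul H C n u v hu hv), ?_⟩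
    rw [eu, ev, smul_mul_smul_comm, ← pow_add, hd, pow_add, mul_smul]
  choose z hz ez using key
  refine ⟨∑ s, z s, Submodule.sum_mem _ (fun s _ => hz s), ?_⟩
  rw [deltaN_mul, Finset.smul_sum]
  exact Finset.sum_congr rfl (fun s _ => ez s)

end helpers

/-- If `C_q` is a unital subalgebra and left coideal of `H`, then
    `C_q^Lsh` is a unital subalgebra of `H'`. -/
theorem Lsh_subalgebra_of_Hprime (C : Subalgebra R H)
    (hC : ∀ c ∈ C, Coalgebra.comul (R := R) c ∈ tsub H ⊤ C.toSubmodule) :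
    Lsh H C.toSubmodule ⊆ Hprime H ∧
    (1 : H) ∈ Lsh H C.toSubmodule ∧
    (∀ x ∈ Lsh H C.toSubmodule, ∀ y ∈ Lsh H C.toSubmodule, x * y ∈ Lsh H C.toSubmodule) := by
  refine ⟨?_, ?_, ?_⟩
  · intro x hx n
    obtain ⟨y, -, e⟩ := Lsh_mem H hx n
    exact ⟨y, e⟩
  · refine ⟨C.one_mem, fun n => ⟨0, zero_mem _, ?_⟩⟩
    rw [smul_zero, deltaN, LinearMap.comp_apply, DeltaIter_one, PiTensorProduct.map_tprod]
    exact MultilinearMap.map_coord_zero _ 0 (by simp)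
  · intro x hx y hy
    refine ⟨C.mul_mem hx.1 hy.1, fun n => ?_⟩
    obtain ⟨z, hz, e⟩ := mul_mem_aux H hx hy (n + 1)
    exact ⟨z, LL_le_tgrp H C n z hz, e⟩

end GQDP
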